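/- arXiv:math/0108094 — 2 statements merged into one kernel-verified Lean document; each statement's English description precedes it below -/
import Mathlib

section
/- For every j with 0 ≤ j ≤ n−2 one has the falling-factorial identity D_1·(D_1 − 1)·(D_1 − 2)···(D_1 − j) = D_{j+1} in ℚ[S_n], where an integer m denotes the scalar m times the identity of the group algebra. -/
/-- `D n j` is the element of the group algebra `ℚ[S_n]` given by the sum of all
permutations `ρ` of `{0,…,n-1}` (0-indexed version of `{1,…,n}`) that are strictly
increasing on the positions `{j,…,n-1}` (1-indexed: `{j+1,…,n}`); `D n 0 = 1`. -/
noncomputable def D (n j : ℕ) : MonoidAlgebra ℚ (Equiv.Perm (Fin n)) :=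
  ∑ ρ : Equiv.Perm (Fin n),
    if ∀ i i' : Fin n, j ≤ (i : ℕ) → i < i' → ρ i < ρ i'
    then MonoidAlgebra.of ℚ (Equiv.Perm (Fin n)) ρ else 0

def IncD {n : ℕ} (j : ℕ) (ρ : Equiv.Perm (Fin n)) : Prop :=
  ∀ i i' : Fin n, j ≤ (i : ℕ) → i < i' → ρ i < ρ i'

lemma cr_lt {n : ℕ} [NeZero n] (a x y : Fin n) (hx : x ≠ a) (hy : y ≠ a) :
    Fin.cycleRange a x < Fin.cycleRange a y ↔ x < y := by
  have key : ∀ z : Fin n, z ≠ a → (Fin.cycleRange a z : ℕ) = if z < a then (z : ℕ) + 1 else z := by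
    intro z hz
    split_ifs with h
    · exact Fin.coe_cycleRange_of_lt h
    · rw [Fin.cycleRange_of_gt (lt_of_le_of_ne (not_lt.mp h) hz.symm)]
  rw [Fin.lt_def, key x hx, key y hy]
  simp only [Fin.lt_def, ne_eq, Fin.ext_iff] at *
  split_ifs <;> omega

lemma cr_self {n : ℕ} [NeZero n] (a : Fin n) : Fin.cycleRange a a = 0 :=
  Fin.cycleRange_self a

lemma inc_iff {n : ℕ} [NeZero n] (j : ℕ) (π : Equiv.Perm (Fin n)) (p : Fin n) :
    IncD j (Fin.cycleRange (π p) * π) ↔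
      ((p : ℕ) < j ∧ IncD j π) ∨ ((p : ℕ) = j ∧ IncD (j + 1) π) := by
  have ne : ∀ i, i ≠ p → π i ≠ π p := fun i h h' => h (π.injective h')
  have pos : ∀ i, i ≠ p → 0 < Fin.cycleRange (π p) (π i) := by
    intro i h
    rw [Fin.pos_iff_ne_zero, ← cr_self (π p)]
    exact fun h' => ne i h ((Fin.cycleRange (π p)).injective h')
  constructor
  · intro H
    rcases lt_trichotomy (p : ℕ) j with h | h | h
    · left
      refine ⟨h, fun i i' hi hlt => ?_⟩
      have hi' : (i : ℕ) < i' := hlt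
      have h1 : i ≠ p := by rintro rfl; omega
      have h2 : i' ≠ p := by rintro rfl; omega
      exact (cr_lt _ _ _ (ne i h1) (ne i' h2)).1 (H i i' hi hlt)
    · right
      refine ⟨h, fun i i' hi hlt => ?_⟩
      have hi' : (i : ℕ) < i' := hlt
      have h1 : i ≠ p := by rintro rfl; omega
      have h2 : i' ≠ p := by rintro rfl; omega
      exact (cr_lt _ _ _ (ne i h1) (ne i' h2)).1 (H i i' (by omega) hlt)
    · exfalso
      have := H ⟨j, h.trans p.2⟩ p le_rfl h
      simp [Equiv.Perm.mul_apply, cr_self] at this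
  · rintro (⟨h, H⟩ | ⟨h, H⟩) i i' hi hlt
    · have hi' : (i : ℕ) < i' := hlt
      have h1 : i ≠ p := by rintro rfl; omega
      have h2 : i' ≠ p := by rintro rfl; omega
      exact (cr_lt _ _ _ (ne i h1) (ne i' h2)).2 (H i i' hi hlt)
    · have hi' : (i : ℕ) < i' := hlt
      have h2 : i' ≠ p := by rintro rfl; omega
      by_cases h1 : i = p
      · subst h1
        have := pos i' h2
        simpa [Equiv.Perm.mul_apply, cr_self] using this
      · have : (i : ℕ) ≠ p := fun h' => h1 (Fin.ext h')
        exact (cr_lt _ _ _ (ne i h1) (ne i' h2)).2 (H i i' (by omega) hlt)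

lemma inc_zero {n : ℕ} (π : Equiv.Perm (Fin n)) : IncD 0 π ↔ π = 1 := by
  constructor
  · intro H
    have hs : StrictMono π := fun i i' h => H i i' (Nat.zero_le _) h
    have := Subsingleton.elim (hs.orderIsoOfSurjective π π.surjective) (OrderIso.refl _)
    ext i
    have h2 := congrArg (fun f => f i) this
    simpa using congrArg Fin.val h2
  · rintro rfl i i' _ h
    exact h

open Classical in
lemma D_eq (n j : ℕ) : D n j = ∑ ρ : Equiv.Perm (Fin n),
    if IncD j ρ then MonoidAlgebra.of ℚ (Equiv.Perm (Fin n)) ρ else 0 := by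
  unfold D IncD
  refine Finset.sum_congr rfl fun ρ _ => ?_
  congr

lemma D_zero (n : ℕ) : D n 0 = 1 := by
  classical
  rw [D_eq]
  simp [inc_zero, MonoidAlgebra.one_def]

lemma D_one (n : ℕ) [NeZero n] : D n 1 = ∑ a : Fin n,
    MonoidAlgebra.of ℚ (Equiv.Perm (Fin n)) (Fin.cycleRange a)⁻¹ := by
  classical
  rw [D_eq, ← Finset.sum_filter]
  symm
  have h0 : ∀ π : Equiv.Perm (Fin n), IncD 1 π ↔ Fin.cycleRange (π 0) * π = 1 := by
    intro π
    rw [← inc_zero, inc_iff]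
    simp
  refine Finset.sum_bij (fun a _ => (Fin.cycleRange a)⁻¹) ?_ ?_ ?_ ?_
  · intro a _
    simp only [Finset.mem_filter, Finset.mem_univ, true_and]
    have : (Fin.cycleRange a)⁻¹ 0 = a := by
      rw [Equiv.Perm.inv_eq_iff_eq, cr_self]
    rw [h0, this, mul_inv_cancel]
  · intro a _ b _ h
    have h1 := inv_injective h
    have h2 : Fin.cycleRange b a = Fin.cycleRange b b := by
      rw [← h1, cr_self, h1, cr_self]
    exact (Fin.cycleRange b).injective h2
  · intro π hπ
    simp only [Finset.mem_filter, Finset.mem_univ, true_and] at hπ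
    exact ⟨π 0, Finset.mem_univ _, inv_eq_of_mul_eq_one_right ((h0 π).1 hπ)⟩
  · intros; rfl

lemma D_step (n j : ℕ) (hj : j < n) : D n 1 * D n j = j * D n j + D n (j + 1) := by
  classical
  have : NeZero n := ⟨by omega⟩
  have e1 : ∀ a : Fin n, MonoidAlgebra.of ℚ (Equiv.Perm (Fin n)) (Fin.cycleRange a)⁻¹ * D n j
      = ∑ π : Equiv.Perm (Fin n), if IncD j (Fin.cycleRange a * π)
        then MonoidAlgebra.of ℚ (Equiv.Perm (Fin n)) π else 0 := by
    intro a
    rw [D_eq, Finset.mul_sum, ← Equiv.sum_comp (Equiv.mulLeft (Fin.cycleRange a))]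
    refine Finset.sum_congr rfl fun π _ => ?_
    change MonoidAlgebra.of ℚ (Equiv.Perm (Fin n)) (Fin.cycleRange a)⁻¹ *
      (if IncD j (Fin.cycleRange a * π) then
        MonoidAlgebra.of ℚ (Equiv.Perm (Fin n)) (Fin.cycleRange a * π) else 0) = _
    by_cases h : IncD j (Fin.cycleRange a * π)
    · rw [if_pos h, if_pos h, ← map_mul, inv_mul_cancel_left]
    · rw [if_neg h, if_neg h, mul_zero]
  rw [D_one, Finset.sum_mul, Finset.sum_congr rfl fun a _ => e1 a, Finset.sum_comm, D_eq, D_eq,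
    Finset.mul_sum, ← Finset.sum_add_distrib]
  refine Finset.sum_congr rfl fun π _ => ?_
  rw [← Equiv.sum_comp π]
  have e2 : ∀ p : Fin n, (if IncD j (Fin.cycleRange (π p) * π)
        then MonoidAlgebra.of ℚ (Equiv.Perm (Fin n)) π else 0)
      = (if (p : ℕ) < j then (if IncD j π then MonoidAlgebra.of ℚ (Equiv.Perm (Fin n)) π else 0) else 0)
      + (if p = ⟨j, hj⟩ then (if IncD (j+1) π then MonoidAlgebra.of ℚ (Equiv.Perm (Fin n)) π else 0) else 0) := by
    intro p
    simp only [inc_iff, Fin.ext_iff]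
    rcases lt_trichotomy (p : ℕ) j with h | h | h
    · simp [h, h.ne]
    · simp [h]
    · simp [h.ne', h.not_gt]
  rw [Finset.sum_congr rfl fun p _ => e2 p, Finset.sum_add_distrib, Finset.sum_ite_eq' ]
  simp only [Finset.mem_univ, if_true]
  congr 1
  rw [← Finset.sum_filter, Finset.sum_const, nsmul_eq_mul]
  congr 2
  rw [Fin.card_filter_val_lt, min_eq_right hj.le]

theorem stmt_2 (n : ℕ) (hn : 2 ≤ n) (j : ℕ) (hj : j ≤ n - 2) :
    ((List.range (j + 1)).map
      (fun m => D n 1 - (m : MonoidAlgebra ℚ (Equiv.Perm (Fin n))))).prod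
      = D n (j + 1) := by
  have main : ∀ k, k ≤ n → Commute (D n 1) (D n k) ∧ ((List.range k).map
      (fun m : ℕ => D n 1 - (m : MonoidAlgebra ℚ (Equiv.Perm (Fin n))))).prod = D n k := by
    intro k
    induction k with
    | zero => intro _; simp [D_zero]
    | succ k ih =>
      intro hk
      obtain ⟨hc, hp⟩ := ih (by omega)
      have hs := D_step n k (by omega)
      have hs' : D n (k + 1) = (D n 1 - (k : MonoidAlgebra ℚ (Equiv.Perm (Fin n)))) * D n k := by
        rw [sub_mul, hs, add_sub_cancel_left]
      constructor
      · rw [hs']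
        exact ((Commute.refl _).sub_right (Nat.cast_commute k _).symm).mul_right hc
      · rw [List.range_succ, List.map_append, List.prod_append, hp, hs']
        simp only [List.map_cons, List.map_nil, List.prod_singleton]
        exact (hc.symm.sub_right (Nat.cast_commute k _).symm).eq
  rw [← (main (j + 1) (by omega)).2]
  congr 1
  simp only [List.bind_eq_flatMap, List.pure_def, ← List.map_eq_flatMap, List.map_map]
  rfl
end

section
/- Let H_n be the hyperoctahedral group of signed permutations, realized as the group of permutations π of {1,…,n} × {+1,−1} satisfying π(i,−s) = −π(i,s) (where −(p,t) := (p,−t)). For each p ∈ {1,…,n} and ε ∈ {+1,−1} let π_{p,ε} ∈ H_n be the element with π_{p,ε}(p, s) = (1, ε·s), π_{p,ε}(i, s) = (i+1, s) for i < p, and π_{p,ε}(i, s) = (i, s) for i > p. Set F_1 := Σ_{p=1}^{n} Σ_{ε ∈ {+1,−1}} π_{p,ε} ∈ ℚ[H_n]. Then F_1·(F_1 − 2)·(F_1 − 4)···(F_1 − (2n−2))·(F_1 − 2n) = 0 in the group algebra ℚ[H_n], i.e. the product of the factors (F_1 − 2i) over i = 0,1,…,n vanishes. -/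
def SgnP {n : ℕ} (u : Equiv.Perm (Fin n × ℤˣ)) : Prop :=
  ∀ i s, u (i, -s) = ((u (i, s)).1, -(u (i, s)).2)

def PP {n : ℕ} (k : ℕ) (u : Equiv.Perm (Fin n × ℤˣ)) : Prop :=
  SgnP u ∧ (∀ j : Fin n, k ≤ (j : ℕ) → (u (j, 1)).2 = 1) ∧
  (∀ i j : Fin n, k ≤ (i : ℕ) → i < j → (u (i, 1)).1 < (u (j, 1)).1)

theorem PP_zero {n : ℕ} (u : Equiv.Perm (Fin n × ℤˣ)) : PP 0 u ↔ u = 1 := by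
  constructor
  · rintro ⟨h1, h2, h3⟩
    have hm : StrictMono (fun j : Fin n => (u (j, 1)).1) := fun i j h => h3 i j (Nat.zero_le _) h
    have hid : ∀ j : Fin n, (u (j, 1)).1 = j := by
      have := (StrictMono.range_inj hm strictMono_id).1 (by
        rw [Set.range_id]
        exact (Finite.surjective_of_injective hm.injective).range_eq)
      intro j
      exact congrFun this j
    have hu : ∀ j : Fin n, u (j, 1) = (j, 1) := fun j =>
      Prod.ext (hid j) (h2 j (Nat.zero_le _))
    ext1 ⟨j, s⟩
    rcases Int.units_eq_one_or s with rfl | rfl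
    · simpa using hu j
    · rw [h1 j 1, hu j]; rfl
  · rintro rfl
    exact ⟨fun i s => rfl, fun j _ => rfl, fun i j _ h => h⟩

theorem PP_succ {n k : ℕ} {u : Equiv.Perm (Fin n × ℤˣ)} (h : PP k u) : PP (k + 1) u :=
  ⟨h.1, fun j hj => h.2.1 j (by omega), fun i j hi hij => h.2.2 i j (by omega) hij⟩

section
variable {n : ℕ} {p : Fin n} {ε : ℤˣ} {g : Equiv.Perm (Fin n × ℤˣ)}

theorem sgn_iff (hs : SgnP g) (u : Equiv.Perm (Fin n × ℤˣ)) : SgnP (u * g) ↔ SgnP u := by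
  constructor
  · intro h i s
    have := h (g.symm (i, s)).1 (g.symm (i, s)).2
    simp only [Equiv.Perm.mul_apply] at this
    rw [hs] at this
    simpa using this
  · intro h i s
    simp only [Equiv.Perm.mul_apply]
    rw [hs, h]

theorem PP_lt {k : ℕ} (hs : SgnP g)
    (hgt : ∀ (i : Fin n) (s : ℤˣ), (p : ℕ) < (i : ℕ) → g (i, s) = (i, s))
    (u : Equiv.Perm (Fin n × ℤˣ)) (hp : (p : ℕ) < k) : PP k (u * g) ↔ PP k u := by
  have key : ∀ j : Fin n, k ≤ (j : ℕ) → (u * g) (j, 1) = u (j, 1) := by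
    intro j hj
    rw [Equiv.Perm.mul_apply, hgt j 1 (by omega)]
  unfold PP
  rw [sgn_iff hs]
  refine and_congr Iff.rfl (and_congr ?_ ?_)
  · refine forall_congr' fun j => forall_congr' fun hj => ?_
    rw [key j hj]
  · refine forall_congr' fun i => forall_congr' fun j => forall_congr' fun hi =>
      forall_congr' fun hij => ?_
    rw [key i hi, key j (by have : (i : ℕ) < j := hij
                            omega)]

/-- for `k ≤ p` -/
theorem PP_ge {k : ℕ} (hs : SgnP g)
    (htop : ∀ (s : ℤˣ), g (p, s) = (⟨0, p.pos⟩, ε * s))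
    (hlt : ∀ (i : Fin n) (s : ℤˣ) (h : (i : ℕ) < (p : ℕ)),
      g (i, s) = (⟨(i : ℕ) + 1, lt_of_le_of_lt h p.isLt⟩, s))
    (hgt : ∀ (i : Fin n) (s : ℤˣ), (p : ℕ) < (i : ℕ) → g (i, s) = (i, s))
    (u : Equiv.Perm (Fin n × ℤˣ)) (hp : k ≤ (p : ℕ)) : PP k (u * g) ↔
      (PP (k + 1) u ∧ (u (⟨0, p.pos⟩, 1)).2 = ε ∧
      (∀ j : Fin n, k < (j : ℕ) → j ≤ p → (u (j, 1)).1 < (u (⟨0, p.pos⟩, 1)).1) ∧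
      (∀ j : Fin n, p < j → (u (⟨0, p.pos⟩, 1)).1 < (u (j, 1)).1)) := by
  have et : ∀ (hu : SgnP u), (u * g) (p, 1) =
      ((u (⟨0, p.pos⟩, 1)).1, ε * (u (⟨0, p.pos⟩, 1)).2) := by
    intro hu
    rw [Equiv.Perm.mul_apply, htop]
    rcases Int.units_eq_one_or ε with rfl | rfl
    · simp
    · simpa using hu ⟨0, p.pos⟩ 1
  have el : ∀ (i : Fin n) (h : (i : ℕ) < p), (u * g) (i, 1) =
      u (⟨(i : ℕ) + 1, lt_of_le_of_lt h p.isLt⟩, 1) := by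
    intro i h
    rw [Equiv.Perm.mul_apply, hlt i 1 h]
  have eg : ∀ (i : Fin n) (h : (p : ℕ) < i), (u * g) (i, 1) = u (i, 1) := by
    intro i h
    rw [Equiv.Perm.mul_apply, hgt i 1 h]
  have pre : ∀ j : Fin n, k + 1 ≤ (j : ℕ) → j ≤ p →
      ∃ i : Fin n, k ≤ (i : ℕ) ∧ i < p ∧ (i : ℕ) + 1 = j ∧ (u * g) (i, 1) = u (j, 1) := by
    intro j hj hjp
    have hjp' : (j : ℕ) ≤ p := hjp
    refine ⟨⟨(j : ℕ) - 1, by omega⟩, by simp; omega, ?_, by simp; omega, ?_⟩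
    · rw [Fin.lt_def]; simp; omega
    · rw [el _ (by simp; omega)]
      congr 2
      ext; simp; omega
  constructor
  · rintro ⟨h1, h2, h3⟩
    have hu := (sgn_iff hs u).1 h1
    have et' := et hu
    have A : ∀ j : Fin n, k < (j : ℕ) → j ≤ p → (u (j, 1)).1 < (u (⟨0, p.pos⟩, 1)).1 := by
      intro j hj hjp
      obtain ⟨i, hi, hip, -, e⟩ := pre j hj hjp
      have := h3 i p hi hip
      rwa [e, et'] at this
    have B : ∀ j : Fin n, p < j → (u (⟨0, p.pos⟩, 1)).1 < (u (j, 1)).1 := by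
      intro j hj
      have := h3 p j hp hj
      rwa [eg j hj, et'] at this
    refine ⟨⟨hu, ?_, ?_⟩, ?_, A, B⟩
    · intro j hj
      rcases le_or_gt j p with h | h
      · obtain ⟨i, hi, hip, -, e⟩ := pre j hj h
        rw [← e]; exact h2 i hi
      · rw [← eg j h]; exact h2 j (by omega)
    · intro i j hi hij
      rcases le_or_gt i p with h | h
      · rcases le_or_gt j p with h' | h'
        · obtain ⟨i', hi', hip, e1, e⟩ := pre i hi h
          obtain ⟨j', hj', hjp, e1', e'⟩ := pre j (by have : (i : ℕ) < j := hij
                                                      omega) h'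
          rw [← e, ← e']
          refine h3 i' j' hi' ?_
          rw [Fin.lt_def] at hij ⊢
          omega
        · exact (A i hi h).trans (B j h')
      · have h' := h.trans hij
        rw [← eg i h, ← eg j h']
        exact h3 i j (by omega) hij
    · have := h2 p hp
      rw [et'] at this
      have this : ε * (u (⟨0, p.pos⟩, 1)).2 = 1 := this
      calc (u (⟨0, p.pos⟩, 1)).2 = (ε * ε) * (u (⟨0, p.pos⟩, 1)).2 := by
            rw [Int.units_mul_self, one_mul]
        _ = ε := by rw [mul_assoc, this, mul_one]
  · rintro ⟨⟨hu, h2, h3⟩, hε, A, B⟩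
    have et' := et hu
    have et1 : ((u * g) (p, 1)).1 = (u (⟨0, p.pos⟩, 1)).1 := by rw [et']
    refine ⟨(sgn_iff hs u).2 hu, ?_, ?_⟩
    · intro j hj
      rcases lt_trichotomy j p with h | h | h
      · rw [el j h]; exact h2 _ (by simpa using hj)
      · rw [h, et', hε]; exact Int.units_mul_self ε
      · rw [eg j h]; exact h2 _ (by have : (p : ℕ) < j := h
                                    omega)
    · intro i j hi hij
      rcases lt_trichotomy i p with h | h | h
      · rcases lt_trichotomy j p with h' | h' | h'
        · rw [el i h, el j h']
          exact h3 _ _ (by simpa using hi) (by rw [Fin.lt_def] at hij ⊢; exact Nat.succ_lt_succ hij)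
        · rw [h', el i h, et1]
          exact A _ (by simp; omega) (by rw [Fin.le_def]; simpa using h)
        · rw [el i h, eg j h']
          exact (A _ (by simp; omega) (by rw [Fin.le_def]; simpa using h)).trans (B j h')
      · subst h
        rw [et1, eg j hij]; exact B j hij
      · have h' := h.trans hij
        rw [eg i h, eg j h']
        exact h3 i j (by have : (p : ℕ) < i := h
                         omega) hij
end

theorem exists_pos {n k : ℕ} (hk : k < n) (u : Equiv.Perm (Fin n × ℤˣ)) (hu : PP (k + 1) u) :
    ∃ p : Fin n, ∀ q : Fin n, (k ≤ (q : ℕ) ∧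
      (∀ j : Fin n, k < (j : ℕ) → j ≤ q → (u (j, 1)).1 < (u (⟨0, by omega⟩, 1)).1) ∧
      (∀ j : Fin n, q < j → (u (⟨0, by omega⟩, 1)).1 < (u (j, 1)).1)) ↔ q = p := by
  obtain ⟨hs, h2, h3⟩ := hu
  set z : Fin n := ⟨0, by omega⟩ with hz
  have hne : ∀ j : Fin n, k < (j : ℕ) → (u (j, 1)).1 ≠ (u (z, 1)).1 := by
    intro j hj he
    have hj1 := h2 j hj
    have : ∃ t, u (z, t) = u (j, 1) := by
      rcases Int.units_eq_one_or (u (z, 1)).2 with h | h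
      · exact ⟨1, Prod.ext he.symm (by rw [h, hj1])⟩
      · refine ⟨-1, ?_⟩
        rw [hs]
        exact Prod.ext he.symm (by simp [h, hj1])
    obtain ⟨t, ht⟩ := this
    have := congrArg (fun x => (x.1 : ℕ)) (u.injective ht)
    simp [hz] at this
    omega
  classical
  let S : Finset (Fin n) := Finset.univ.filter
    fun j => (j : ℕ) = k ∨ (k < (j : ℕ) ∧ (u (j, 1)).1 < (u (z, 1)).1)
  have hS : S.Nonempty := ⟨⟨k, hk⟩, by simp [S]⟩
  have hmem := S.max'_mem hS
  have hmax : ∀ j ∈ S, j ≤ S.max' hS := fun j hj => S.le_max' j hj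
  set p := S.max' hS with hp
  have hmem' : (p : ℕ) = k ∨ (k < (p : ℕ) ∧ (u (p, 1)).1 < (u (z, 1)).1) := by
    simpa [S] using hmem
  have P1 : k ≤ (p : ℕ) := by omega
  have P2 : ∀ j : Fin n, k < (j : ℕ) → j ≤ p → (u (j, 1)).1 < (u (z, 1)).1 := by
    intro j hj hjp
    have hjp' : (j : ℕ) ≤ p := hjp
    rcases hmem' with h | ⟨_, h⟩
    · omega
    · rcases hjp.eq_or_lt with e | e
      · rw [e]; exact h
      · exact (h3 j p hj e).trans h
  have P3 : ∀ j : Fin n, p < j → (u (z, 1)).1 < (u (j, 1)).1 := by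
    intro j hj
    have hj' : (p : ℕ) < j := hj
    rcases lt_or_ge (u (z, 1)).1 (u (j, 1)).1 with h | h
    · exact h
    · have : j ∈ S := by
        simp only [S, Finset.mem_filter, Finset.mem_univ, true_and]
        exact Or.inr ⟨by omega, lt_of_le_of_ne h (hne j (by omega))⟩
      exact absurd (hmax j this) (not_le.2 hj)
  refine ⟨p, fun q => ⟨?_, ?_⟩⟩
  · rintro ⟨Q1, Q2, Q3⟩
    rcases lt_trichotomy q p with h | h | h
    · have h' : (q : ℕ) < p := h
      exact absurd (Q3 p h) (not_lt.2 (P2 p (by omega) le_rfl).le)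
    · exact h
    · have h' : (p : ℕ) < q := h
      exact absurd (P3 q h) (not_lt.2 (Q2 q (by omega) le_rfl).le)
  · rintro rfl
    exact ⟨P1, P2, P3⟩

open Classical in
noncomputable def BB (n k : ℕ) : MonoidAlgebra ℚ (Equiv.Perm (Fin n × ℤˣ)) :=
  MonoidAlgebra.ofCoeff (Finsupp.equivFunOnFinite.symm fun w => if PP k w⁻¹ then 1 else 0)

open Classical in
theorem BB_apply (n k : ℕ) (v : Equiv.Perm (Fin n × ℤˣ)) :
    (BB n k).coeff v = if PP k v⁻¹ then 1 else 0 := rfl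

theorem BB_zero (n : ℕ) : BB n 0 = 1 := by
  classical
  ext v
  rw [BB_apply, MonoidAlgebra.one_def, MonoidAlgebra.coeff_single, Finsupp.single_apply]
  simp only [PP_zero, inv_eq_one, eq_comm]


/-- The hyperoctahedral group `H_n` is realized inside the permutations of
`Fin n × ℤˣ` (positions `{1,…,n}`, 0-indexed, times signs `{+1,−1}`), as those `π` with
`π(i,−s) = −π(i,s)`.  The elements `π p ε` below (remove the card in position `p` and
put it on top with sign `ε`) are pinned down by the hypotheses: `π p ε` sends `(p, s)`
to `(1, ε·s)` (0-indexed: position `0`), sends `(i, s)` to `(i+1, s)` for `i < p`, and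
fixes `(i, s)` for `i > p`; these automatically lie in `H_n`.  With
`F_1 := Σ_{p} Σ_{ε} π_{p,ε}` in the group algebra, one has
`F_1·(F_1 − 2)·(F_1 − 4)···(F_1 − (2n−2))·(F_1 − 2n) = 0`, i.e. the product of the
factors `(F_1 − 2i)` over `i = 0,1,…,n` vanishes (integers denote scalar multiples of
the identity of the group algebra; the identity holds equivalently in `ℚ[H_n]` since
`ℚ[H_n]` embeds in the group algebra used here). -/
theorem stmt_13 (n : ℕ)
    (π : Fin n → ℤˣ → Equiv.Perm (Fin n × ℤˣ))
    (hsigned : ∀ (p : Fin n) (ε : ℤˣ) (i : Fin n) (s : ℤˣ),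
      π p ε (i, -s) = ((π p ε (i, s)).1, -(π p ε (i, s)).2))
    (htop : ∀ (p : Fin n) (ε s : ℤˣ), π p ε (p, s) = (⟨0, p.pos⟩, ε * s))
    (hlt : ∀ (p : Fin n) (ε : ℤˣ) (i : Fin n) (s : ℤˣ) (h : (i : ℕ) < (p : ℕ)),
      π p ε (i, s) = (⟨(i : ℕ) + 1, lt_of_le_of_lt h p.isLt⟩, s))
    (hgt : ∀ (p : Fin n) (ε : ℤˣ) (i : Fin n) (s : ℤˣ), (p : ℕ) < (i : ℕ) →
      π p ε (i, s) = (i, s)) :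
    ((List.range (n + 1)).map
      (fun i => (∑ p : Fin n, ∑ ε : ℤˣ, MonoidAlgebra.of ℚ (Equiv.Perm (Fin n × ℤˣ)) (π p ε))
        - ((2 * i : ℕ) : MonoidAlgebra ℚ (Equiv.Perm (Fin n × ℤˣ))))).prod = 0 := by
  classical
  set F : MonoidAlgebra ℚ (Equiv.Perm (Fin n × ℤˣ)) :=
    ∑ p : Fin n, ∑ ε : ℤˣ, MonoidAlgebra.of ℚ (Equiv.Perm (Fin n × ℤˣ)) (π p ε) with hF
  -- coefficients of `F * B_k`
  have key : ∀ k (v : Equiv.Perm (Fin n × ℤˣ)), k ≤ n →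
      (F * BB n k).coeff v = 2 * (k : ℚ) * (if PP k v⁻¹ then 1 else 0) +
        ∑ p : Fin n, ∑ ε : ℤˣ,
          if k ≤ (p : ℕ) ∧ PP k (v⁻¹ * π p ε) then (1 : ℚ) else 0 := by
    intro k v hk
    have e1 : (F * BB n k).coeff v =
        ∑ p : Fin n, ∑ ε : ℤˣ, if PP k (v⁻¹ * π p ε) then (1 : ℚ) else 0 := by
      rw [hF, Finset.sum_mul, MonoidAlgebra.coeff_sum, Finsupp.finsetSum_apply]
      refine Finset.sum_congr rfl fun p _ => ?_
      rw [Finset.sum_mul, MonoidAlgebra.coeff_sum, Finsupp.finsetSum_apply]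
      refine Finset.sum_congr rfl fun ε _ => ?_
      rw [MonoidAlgebra.of_apply, MonoidAlgebra.coeff_single_mul_apply, BB_apply, one_mul,
        mul_inv_rev, inv_inv]
    have e2 : ∀ (p : Fin n) (ε : ℤˣ), (if PP k (v⁻¹ * π p ε) then (1 : ℚ) else 0) =
        (if (p : ℕ) < k then (if PP k v⁻¹ then (1 : ℚ) else 0) else 0) +
        (if k ≤ (p : ℕ) ∧ PP k (v⁻¹ * π p ε) then (1 : ℚ) else 0) := by
      intro p ε
      by_cases h : (p : ℕ) < k
      · simp [h, not_le.2 h, PP_lt (hsigned p ε) (hgt p ε) v⁻¹ h]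
      · simp [h, not_lt.1 h]
    rw [e1]
    simp only [e2, Finset.sum_add_distrib]
    congr 1
    have hc : ((Finset.univ.filter fun p : Fin n => (p : ℕ) < k).card : ℚ) = k := by
      rw [Fin.card_filter_val_lt, min_eq_right hk]
    simp only [Finset.sum_const, Finset.card_univ, Fintype.card_units_int, ← Finset.smul_sum]
    rw [← Finset.sum_filter, Finset.sum_const, nsmul_eq_mul, nsmul_eq_mul, hc]
    push_cast
    ring
  have step : ∀ k, k < n → F * BB n k = ((2 * k : ℕ) : MonoidAlgebra ℚ _) * BB n k
      + BB n (k + 1) := by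
    intro k hk
    ext v
    rw [key k v hk.le, ← nsmul_eq_mul, MonoidAlgebra.coeff_add, MonoidAlgebra.coeff_smul,
      Finsupp.add_apply, Finsupp.smul_apply, BB_apply, BB_apply, nsmul_eq_mul]
    push_cast
    congr 1
    have h0 : ∀ (p : Fin n) (ε : ℤˣ), (k ≤ (p : ℕ) ∧ PP k (v⁻¹ * π p ε)) ↔
        (k ≤ (p : ℕ) ∧ (PP (k + 1) v⁻¹ ∧
          (v⁻¹ (⟨0, p.pos⟩, 1)).2 = ε ∧
          (∀ j : Fin n, k < (j : ℕ) → j ≤ p → (v⁻¹ (j, 1)).1 < (v⁻¹ (⟨0, p.pos⟩, 1)).1) ∧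
          (∀ j : Fin n, p < j → (v⁻¹ (⟨0, p.pos⟩, 1)).1 < (v⁻¹ (j, 1)).1))) := fun p ε =>
      and_congr_right fun hp =>
        PP_ge (hsigned p ε) (htop p ε) (hlt p ε) (hgt p ε) v⁻¹ hp
    simp only [h0]
    by_cases hv : PP (k + 1) v⁻¹
    · obtain ⟨p0, hp0⟩ := exists_pos hk v⁻¹ hv
      have h1 : ∀ (p : Fin n) (ε : ℤˣ), (k ≤ (p : ℕ) ∧ (PP (k + 1) v⁻¹ ∧
          (v⁻¹ (⟨0, p.pos⟩, 1)).2 = ε ∧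
          (∀ j : Fin n, k < (j : ℕ) → j ≤ p → (v⁻¹ (j, 1)).1 < (v⁻¹ (⟨0, p.pos⟩, 1)).1) ∧
          (∀ j : Fin n, p < j → (v⁻¹ (⟨0, p.pos⟩, 1)).1 < (v⁻¹ (j, 1)).1))) ↔
          (p = p0 ∧ (v⁻¹ (⟨0, Nat.zero_lt_of_lt hk⟩, 1)).2 = ε) := by
        intro p ε
        rw [← hp0 p]
        tauto
      simp only [h1, ite_and]
      simp [hv]
      exact (Int.units_eq_one_or _).resolve_left
    · simp [hv]
  have last : F * BB n n = ((2 * n : ℕ) : MonoidAlgebra ℚ _) * BB n n := by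
    ext v
    rw [key n v le_rfl, ← nsmul_eq_mul, MonoidAlgebra.coeff_smul,
      Finsupp.smul_apply, BB_apply, nsmul_eq_mul]
    have : ∀ p : Fin n, ¬ n ≤ (p : ℕ) := fun p => not_le.2 p.isLt
    simp [this]
  have main : ∀ k, k ≤ n → ((List.range k).map
      (fun i => F - ((2 * i : ℕ) : MonoidAlgebra ℚ (Equiv.Perm (Fin n × ℤˣ))))).prod = BB n k
      ∧ Commute F (BB n k) := by
    intro k
    induction k with
    | zero => intro _; rw [BB_zero]; exact ⟨by simp, Commute.one_right F⟩
    | succ k ih =>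
      intro hk
      obtain ⟨i1, i2⟩ := ih (by omega)
      have hs := step k (by omega)
      have hB : BB n (k + 1) = BB n k * (F - ((2 * k : ℕ) : MonoidAlgebra ℚ _)) := by
        rw [mul_sub, ← i2.eq, hs, (Nat.cast_commute (2 * k) (BB n k)).eq]
        abel
      refine ⟨?_, ?_⟩
      · rw [List.range_succ, List.map_append, List.prod_append, i1, hB]
        simp
      · rw [hB]
        exact i2.mul_right ((Commute.refl F).sub_right (Nat.commute_cast F (2 * k)))
  obtain ⟨m1, m2⟩ := main n le_rfl
  rw [List.range_succ, List.map_append, List.prod_append, m1]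
  simp only [List.map_cons, List.map_nil, List.prod_cons, List.prod_nil, mul_one]
  rw [mul_sub, ← m2.eq, last, (Nat.cast_commute (2 * n) (BB n n)).eq, sub_self]
end
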